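/- arXiv:2605.10173 — 2 statements merged into one kernel-verified Lean document; each statement's English description precedes it below -/
import Mathlib

section
/- Let X be a topological space and P a prevision on X. The following are equivalent: (1) P(𝟙+h) ≥ 1+P(h) for every h ∈ ℒX; (2) P(𝟙) ≥ 1 and for every α ∈ (0,1] and every h ∈ ℒX, P(α·h + (1−α)·𝟙) ≤ 1 implies P(h) ≤ 1. -/
open scoped ENNReal NNReal

/-- A prevision on `X`: a Scott-continuous, positively homogeneous functional on the
lower semicontinuous maps `X → ℝ≥0∞` (represented as a functional on all maps,
constrained only on lower semicontinuous arguments). -/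
def IsPrevision {X : Type*} [TopologicalSpace X] (F : (X → ℝ≥0∞) → ℝ≥0∞) : Prop :=
  (∀ ⦃h h' : X → ℝ≥0∞⦄, LowerSemicontinuous h → LowerSemicontinuous h' →
      h ≤ h' → F h ≤ F h') ∧
  (∀ D : Set (X → ℝ≥0∞), D.Nonempty → (∀ h ∈ D, LowerSemicontinuous h) →
      DirectedOn (· ≤ ·) D → F (fun x => ⨆ h ∈ D, h x) = ⨆ h ∈ D, F h) ∧
  (∀ (a : ℝ≥0) (h : X → ℝ≥0∞), LowerSemicontinuous h →
      F (fun x => (a : ℝ≥0∞) * h x) = (a : ℝ≥0∞) * F h)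

/-- Sublinearity of a prevision. -/
def PSublinear {X : Type*} [TopologicalSpace X] (F : (X → ℝ≥0∞) → ℝ≥0∞) : Prop :=
  ∀ h h' : X → ℝ≥0∞, LowerSemicontinuous h → LowerSemicontinuous h' →
    F (fun x => h x + h' x) ≤ F h + F h'

/-- Superlinearity of a prevision. -/
def PSuperlinear {X : Type*} [TopologicalSpace X] (F : (X → ℝ≥0∞) → ℝ≥0∞) : Prop :=
  ∀ h h' : X → ℝ≥0∞, LowerSemicontinuous h → LowerSemicontinuous h' →
    F h + F h' ≤ F (fun x => h x + h' x)

/-- Linearity of a prevision. -/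
def PLinear {X : Type*} [TopologicalSpace X] (F : (X → ℝ≥0∞) → ℝ≥0∞) : Prop :=
  ∀ h h' : X → ℝ≥0∞, LowerSemicontinuous h → LowerSemicontinuous h' →
    F (fun x => h x + h' x) = F h + F h'

/-- Subnormalization: `F(𝟙 + h) ≤ 1 + F(h)`. -/
def PSubnormalized {X : Type*} [TopologicalSpace X] (F : (X → ℝ≥0∞) → ℝ≥0∞) : Prop :=
  ∀ h : X → ℝ≥0∞, LowerSemicontinuous h → F (fun x => 1 + h x) ≤ 1 + F h

/-- Normalization: `F(𝟙 + h) = 1 + F(h)`. -/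
def PNormalized {X : Type*} [TopologicalSpace X] (F : (X → ℝ≥0∞) → ℝ≥0∞) : Prop :=
  ∀ h : X → ℝ≥0∞, LowerSemicontinuous h → F (fun x => 1 + h x) = 1 + F h

theorem lsc_mul_aux {X : Type*} [TopologicalSpace X] (a : ℝ≥0) {h : X → ℝ≥0∞}
    (hh : LowerSemicontinuous h) : LowerSemicontinuous (fun x => (a : ℝ≥0∞) * h x) :=
  (ENNReal.continuous_const_mul ENNReal.coe_ne_top).comp_lowerSemicontinuous hh
    (fun _ _ hxy => mul_le_mul_right hxy _)

theorem lsc_one_add_aux {X : Type*} [TopologicalSpace X] {h : X → ℝ≥0∞}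
    (hh : LowerSemicontinuous h) : LowerSemicontinuous (fun x => 1 + h x) :=
  (continuous_const.add continuous_id).comp_lowerSemicontinuous (g := fun y : ℝ≥0∞ => 1 + y) hh
    (fun _ _ hxy => add_le_add_right hxy _)

/-- for a prevision `P`, the following are equivalent:
(1) `P(𝟙+h) ≥ 1+P(h)` for every lower semicontinuous `h`;
(2) `P(𝟙) ≥ 1` and for every `α ∈ (0,1]` and lower semicontinuous `h`,
`P(α·h + (1−α)·𝟙) ≤ 1` implies `P(h) ≤ 1`. -/
theorem statement10 {X : Type*} [TopologicalSpace X] (P : (X → ℝ≥0∞) → ℝ≥0∞)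
    (hP : IsPrevision P) :
    (∀ h : X → ℝ≥0∞, LowerSemicontinuous h → 1 + P h ≤ P (fun x => 1 + h x)) ↔
      (1 ≤ P (fun _ => 1) ∧
        ∀ α : ℝ≥0, 0 < α → α ≤ 1 → ∀ h : X → ℝ≥0∞, LowerSemicontinuous h →
          P (fun x => (α : ℝ≥0∞) * h x + ((1 - α : ℝ≥0) : ℝ≥0∞)) ≤ 1 → P h ≤ 1) := by
  obtain ⟨hmono, -, hhom⟩ := hP
  constructor
  · intro H
    refine ⟨?_, ?_⟩
    · have := H (fun _ => 0) lowerSemicontinuous_const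
      simp only [add_zero] at this
      exact le_trans le_self_add this
    · intro α h0 h1 h hh hle
      rcases h1.eq_or_lt with rfl | h1
      · simpa using hle
      obtain ⟨β, hβ⟩ : ∃ β, β = 1 - α := ⟨_, rfl⟩
      have hβ0 : 0 < β := by rw [hβ]; exact tsub_pos_of_lt h1
      have hs : α + β = 1 := by rw [hβ]; exact add_tsub_cancel_of_le h1.le
      have hc : β * (α / β) = α := mul_div_cancel₀ _ hβ0.ne'
      have hc' : (β : ℝ≥0∞) * ((α / β : ℝ≥0) : ℝ≥0∞) = α := by exact_mod_cast hc
      rw [← hβ] at hle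
      have e : (fun x => (α : ℝ≥0∞) * h x + (β : ℝ≥0∞)) =
          fun x => (β : ℝ≥0∞) * (1 + ((α / β : ℝ≥0) : ℝ≥0∞) * h x) := by
        funext x
        rw [mul_add, ← mul_assoc, hc', mul_one, add_comm]
      rw [e, hhom β _ (lsc_one_add_aux (lsc_mul_aux _ hh))] at hle
      have h2 := H _ (lsc_mul_aux (α / β) hh)
      rw [hhom _ _ hh] at h2
      have h3 := (mul_le_mul_right h2 (β : ℝ≥0∞)).trans hle
      rw [mul_add, ← mul_assoc, hc', mul_one] at h3
      have h4 : (β : ℝ≥0∞) + α * P h ≤ β + α * 1 := by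
        refine h3.trans (le_of_eq ?_)
        rw [mul_one, add_comm]
        exact_mod_cast hs.symm
      have h5 := (ENNReal.add_le_add_iff_left ENNReal.coe_ne_top).1 h4
      exact (ENNReal.mul_le_mul_iff_right (by exact_mod_cast h0.ne') ENNReal.coe_ne_top).1 h5
  · rintro ⟨H1, H⟩ h hh
    by_contra hlt
    rw [not_le] at hlt
    obtain ⟨s, hs1, hs2⟩ := ENNReal.lt_iff_exists_nnreal_btwn.1 hlt
    have hge : 1 ≤ P (fun x => 1 + h x) :=
      H1.trans (hmono lowerSemicontinuous_const (lsc_one_add_aux hh) (fun x => le_self_add))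
    have hs : 1 < s := by exact_mod_cast hge.trans_lt hs1
    obtain ⟨r, rfl⟩ := exists_add_of_le hs.le
    have hr : 0 < r := by simpa using hs
    have hα : 1 - r / (1 + r) = (1 + r)⁻¹ := by
      apply tsub_eq_of_eq_add
      field_simp
    have e1 : (1 + r)⁻¹ = r / (1 + r) * r⁻¹ := by field_simp
    have key := H (r / (1 + r)) (by positivity)
      (div_le_one_of_le₀ le_add_self (by positivity)) _ (lsc_mul_aux r⁻¹ hh)
    rw [hα, hhom _ _ hh] at key
    have e : (fun x => ((r / (1 + r) : ℝ≥0) : ℝ≥0∞) * (((r⁻¹ : ℝ≥0) : ℝ≥0∞) * h x) +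
        (((1 + r)⁻¹ : ℝ≥0) : ℝ≥0∞)) =
        fun x => (((1 + r)⁻¹ : ℝ≥0) : ℝ≥0∞) * (1 + h x) := by
      funext x
      rw [← mul_assoc, ← ENNReal.coe_mul, ← e1, mul_add, mul_one, add_comm]
    rw [e, hhom _ _ (lsc_one_add_aux hh)] at key
    have k := key (by
      refine (mul_le_mul_right hs1.le _).trans (le_of_eq ?_)
      rw [← ENNReal.coe_mul, inv_mul_cancel₀ (by positivity)]
      rfl)
    have k2 := mul_le_mul_right k (r : ℝ≥0∞)
    rw [← mul_assoc, ← ENNReal.coe_mul, mul_inv_cancel₀ hr.ne', ENNReal.coe_one, one_mul,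
      mul_one] at k2
    have := add_le_add_right k2 1
    rw [ENNReal.coe_add, ENNReal.coe_one] at hs2
    exact absurd (hs2.trans_le this) (lt_irrefl _)
end

section
/- Let X be a topological space and P a prevision on X. For every h ∈ ℒX there exists a sublinear prevision F on X with P ≤ F pointwise and F(h) = P(h); consequently, P(h) = min{F(h) : F a sublinear prevision on X with P ≤ F pointwise}, i.e. every prevision is the pointwise minimum of the sublinear previsions above it. -/
open scoped ENNReal NNReal

theorem aux_prev {X : Type*} [TopologicalSpace X] (K : X → ℝ≥0∞) :
    IsPrevision (fun g : X → ℝ≥0∞ => ⨆ x, K x * g x) ∧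
    PSublinear (fun g : X → ℝ≥0∞ => ⨆ x, K x * g x) := by
  refine ⟨⟨?_, ?_, ?_⟩, ?_⟩
  · intro h h' _ _ hh
    exact iSup_mono fun x => mul_le_mul_right (hh x) _
  · intro D _ _ _
    simp only [ENNReal.mul_iSup]
    rw [iSup_comm]
    refine iSup_congr fun h => ?_
    rw [iSup_comm]
  · intro a h _
    simp only [ENNReal.mul_iSup]
    refine iSup_congr fun x => ?_
    ring
  · intro h h' _ _
    refine iSup_le fun x => ?_
    rw [mul_add]
    exact add_le_add (le_iSup (fun x => K x * h x) x) (le_iSup (fun x => K x * h' x) x)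

theorem aux_lsc {X : Type*} [TopologicalSpace X] (a : ℝ≥0) (h : X → ℝ≥0∞)
    (hh : LowerSemicontinuous h) : LowerSemicontinuous (fun x => (a : ℝ≥0∞) * h x) :=
  (ENNReal.continuous_const_mul ENNReal.coe_ne_top).comp_lowerSemicontinuous hh
    (fun _ _ hxy => mul_le_mul_right hxy _)

theorem aux_K {X : Type*} [TopologicalSpace X] (P : (X → ℝ≥0∞) → ℝ≥0∞)
    (hP : IsPrevision P) (h : X → ℝ≥0∞) (hh : LowerSemicontinuous h) :
    ∃ K : X → ℝ≥0∞, (∀ g : X → ℝ≥0∞, LowerSemicontinuous g → P g ≤ ⨆ x, K x * g x) ∧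
      (⨆ x, K x * h x) ≤ P h := by
  obtain ⟨hm, hs, ha⟩ := hP
  by_cases hc : P h = ∞
  · refine ⟨fun _ => ∞, ?_, by simp [hc]⟩
    intro g hg
    by_cases hg0 : ∀ x, g x = 0
    · have h1 := ha 0 g hg
      have h2 : (fun x => ((0 : ℝ≥0) : ℝ≥0∞) * g x) = g := by
        funext x; simp [hg0 x]
      rw [h2] at h1
      rw [h1]; simp
    · push Not at hg0
      obtain ⟨x, hx⟩ := hg0
      refine le_trans le_top (le_trans ?_ (le_iSup _ x))
      simp [ENNReal.top_mul hx]
  classical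
  refine ⟨fun x => if h x = 0 then ∞ else P h / h x, ?_, ?_⟩
  swap
  · refine iSup_le fun x => ?_
    by_cases hx : h x = 0
    · simp [hx]
    · simp only [hx, if_false]
      by_cases hx' : h x = ∞
      · simp [hx', ENNReal.div_top]
      · exact (ENNReal.div_mul_cancel hx hx').le
  intro g hg
  by_cases hc0 : P h = 0
  · by_cases hz : ∀ x, h x = 0 → g x = 0
    · have key := hs (Set.range fun (n : ℕ) x => ((n : ℝ≥0) : ℝ≥0∞) * h x)
        (Set.range_nonempty _) (by rintro _ ⟨n, rfl⟩; exact aux_lsc _ h hh) (by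
          rw [directedOn_range]
          apply Monotone.directed_le
          intro m n hmn x
          dsimp only
          gcongr)
      simp only [iSup_range, ha _ h hh, hc0, mul_zero, iSup_const] at key
      have hl : LowerSemicontinuous (fun x => ⨆ n : ℕ, ((n : ℝ≥0) : ℝ≥0∞) * h x) :=
        lowerSemicontinuous_iSup fun n => aux_lsc _ h hh
      have : P g ≤ 0 := by
        rw [← key]
        · refine hm hg hl fun x => ?_
          dsimp only
          by_cases hx : h x = 0
          · simp [hz x hx]
          · rw [← ENNReal.iSup_mul]
            have : (⨆ n : ℕ, ((n : ℝ≥0) : ℝ≥0∞)) = ∞ := by simpa using ENNReal.iSup_natCast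
            rw [this, ENNReal.top_mul hx]
            exact le_top
      exact this.trans zero_le
    · push Not at hz
      obtain ⟨x, hx, hgx⟩ := hz
      refine le_trans le_top (le_trans ?_ (le_iSup _ x))
      simp [hx, ENNReal.top_mul hgx]
  · refine ENNReal.le_of_forall_pos_le_add ?_
    intro ε hε hfin
    set s := ⨆ x, (if h x = 0 then ∞ else P h / h x) * g x with hsdef
    have hsx : ∀ x, (if h x = 0 then ∞ else P h / h x) * g x ≤ s := fun x =>
      le_iSup (fun x => (if h x = 0 then ∞ else P h / h x) * g x) x
    have htop : (s + ε) / P h ≠ ∞ :=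
      ENNReal.div_ne_top (ENNReal.add_ne_top.2 ⟨hfin.ne, ENNReal.coe_ne_top⟩) hc0
    have hpos : (s + ε) / P h ≠ 0 := by
      refine (ENNReal.div_pos ?_ hc).ne'
      have : (ε : ℝ≥0∞) ≠ 0 := by exact_mod_cast hε.ne'
      simp [this]
    obtain ⟨a, haa⟩ := WithTop.ne_top_iff_exists.1 htop
    change (a : ℝ≥0∞) = _ at haa
    have hle : g ≤ fun x => (a : ℝ≥0∞) * h x := by
      intro x
      dsimp only
      have h1 := hsx x
      by_cases hx : h x = 0
      · simp only [hx, if_true] at h1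
        have : g x = 0 := by
          by_contra hne
          rw [ENNReal.top_mul hne] at h1
          exact absurd hfin (not_lt.2 h1)
        simp [this]
      · by_cases hx' : h x = ∞
        · rw [hx', haa, ENNReal.mul_top hpos]; exact le_top
        · simp only [hx, if_false] at h1
          calc g x = (P h / h x * g x) * (h x / P h) := by
                rw [div_eq_mul_inv, div_eq_mul_inv]
                calc g x = (P h * (P h)⁻¹) * (h x * (h x)⁻¹) * g x := by
                      rw [ENNReal.mul_inv_cancel hc0 hc, ENNReal.mul_inv_cancel hx hx']; simp
                  _ = _ := by ring
            _ ≤ (s + ε) * (h x / P h) := by gcongr; exact h1.trans le_self_add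
            _ = a * h x := by rw [haa, div_eq_mul_inv, div_eq_mul_inv]; ring
    calc P g ≤ P (fun x => (a : ℝ≥0∞) * h x) := hm hg (aux_lsc a h hh) hle
      _ = a * P h := ha a h hh
      _ = s + ε := by rw [haa, ENNReal.div_mul_cancel hc0 hc]
      _ ≤ _ := le_rfl

/-- for every prevision `P` and every lower semicontinuous `h`, there is a
sublinear prevision `F ≥ P` with `F(h) = P(h)`; consequently `P(h)` is the (attained)
infimum of `F(h)` over all sublinear previsions `F ≥ P`. -/
theorem statement16 {X : Type*} [TopologicalSpace X] (P : (X → ℝ≥0∞) → ℝ≥0∞)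
    (hP : IsPrevision P) :
    ∀ h : X → ℝ≥0∞, LowerSemicontinuous h →
      (∃ F : (X → ℝ≥0∞) → ℝ≥0∞, IsPrevision F ∧ PSublinear F ∧
        (∀ g : X → ℝ≥0∞, LowerSemicontinuous g → P g ≤ F g) ∧ F h = P h) ∧
      P h = ⨅ F : {F : (X → ℝ≥0∞) → ℝ≥0∞ //
          IsPrevision F ∧ PSublinear F ∧
            ∀ g : X → ℝ≥0∞, LowerSemicontinuous g → P g ≤ F g}, F.1 h := by
  intro h hh
  obtain ⟨K, h1, h2⟩ := aux_K P hP h hh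
  have hp := aux_prev K
  have he : (⨆ x, K x * h x) = P h := le_antisymm h2 (h1 h hh)
  refine ⟨⟨_, hp.1, hp.2, h1, he⟩, le_antisymm ?_ ?_⟩
  · exact le_iInf fun F => F.2.2.2 h hh
  · exact (iInf_le _ ⟨_, hp.1, hp.2, h1⟩).trans h2
end
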